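/- arXiv:1801.01568 — 4 statements merged into one kernel-verified Lean document; each statement's English description precedes it below -/
import Mathlib

section
/- Let α be a value Ψ-PER and let M, M' ∈ T(Ψ). If for every morphism ψ : Ψ' → Ψ either α_ψ(M⟨ψ⟩, M'⟨ψ⟩) holds or Tm(α)_ψ(M⟨ψ⟩, M'⟨ψ⟩) holds, then Tm(α)(M, M') holds (that is, Tm(α)_{id_Ψ}(M, M')). -/
/-!
Fix `ψ₁ : Ψ₁ ⟶ Ψ` and `ψ₂ : Ψ₂ ⟶ Ψ₁`. If `Tm(α)` relates the `ψ₁`-aspects of `M` and `M'`, its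
instance at `𝟙 Ψ₁` and `ψ₂` is the required coherence condition. If instead `α` relates them, both
aspects are values, so evaluating first and then substituting along `ψ₂` is the same as substituting
along the composite. It then remains only that the aspects at the composite evaluate to
`α`-related values, which holds in either case of the hypothesis (`exists_eval_of_or`).
-/

open CategoryTheory

universe u v w

/-- A contravariant action of a category of dimension contexts on terms,
together with a deterministic step relation on terms at each context. -/
structure TermSystem (C : Type u) [Category.{v} C] where
  T : C → Type w
  sub : ∀ {Ψ' Ψ : C}, (Ψ' ⟶ Ψ) → T Ψ → T Ψ'
  sub_id : ∀ {Ψ : C} (M : T Ψ), sub (𝟙 Ψ) M = M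
  sub_comp : ∀ {Ψ'' Ψ' Ψ : C} (ψ' : Ψ'' ⟶ Ψ') (ψ : Ψ' ⟶ Ψ) (M : T Ψ),
      sub ψ' (sub ψ M) = sub (ψ' ≫ ψ) M
  step : ∀ {Ψ : C}, T Ψ → T Ψ → Prop
  step_det : ∀ {Ψ : C} {M N N' : T Ψ}, step M N → step M N' → N = N'

namespace TermSystem

variable {C : Type u} [Category.{v} C] (S : TermSystem C)

/-- A term is a value if it takes no step. -/
def IsValue {Ψ : C} (M : S.T Ψ) : Prop := ∀ N, ¬ S.step M N

/-- `M ⇓ V`: `M` reaches `V` by the reflexive-transitive closure of the step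
relation, and `V` is a value. -/
def Eval {Ψ : C} (M V : S.T Ψ) : Prop :=
  Relation.ReflTransGen S.step M V ∧ S.IsValue V

/-- A value `Ψ`-PER: a family of symmetric transitive relations, indexed by
morphisms into `Ψ`, relating only values. -/
def IsValuePER {Ψ : C}
    (α : ∀ Ψ' : C, (Ψ' ⟶ Ψ) → S.T Ψ' → S.T Ψ' → Prop) : Prop :=
  (∀ (Ψ' : C) (ψ : Ψ' ⟶ Ψ) (M M' : S.T Ψ'), α Ψ' ψ M M' → α Ψ' ψ M' M) ∧
  (∀ (Ψ' : C) (ψ : Ψ' ⟶ Ψ) (M M' M'' : S.T Ψ'),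
      α Ψ' ψ M M' → α Ψ' ψ M' M'' → α Ψ' ψ M M'') ∧
  (∀ (Ψ' : C) (ψ : Ψ' ⟶ Ψ) (M M' : S.T Ψ'),
      α Ψ' ψ M M' → S.IsValue M ∧ S.IsValue M')

/-- The coherent extension `Tm(α)_ψ` of a family `α` to terms. -/
def Tm {Ψ : C} (α : ∀ Ψ' : C, (Ψ' ⟶ Ψ) → S.T Ψ' → S.T Ψ' → Prop)
    {Ψ' : C} (ψ : Ψ' ⟶ Ψ) (M M' : S.T Ψ') : Prop :=
  ∀ (Ψ₁ Ψ₂ : C) (ψ₁ : Ψ₁ ⟶ Ψ') (ψ₂ : Ψ₂ ⟶ Ψ₁),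
    ∃ (M₁ : S.T Ψ₁) (M₂ M₁₂ : S.T Ψ₂) (M₁' : S.T Ψ₁) (M₂' M₁₂' : S.T Ψ₂),
      S.Eval (S.sub ψ₁ M) M₁ ∧ S.Eval (S.sub ψ₂ M₁) M₂ ∧
      S.Eval (S.sub (ψ₂ ≫ ψ₁) M) M₁₂ ∧
      S.Eval (S.sub ψ₁ M') M₁' ∧ S.Eval (S.sub ψ₂ M₁') M₂' ∧
      S.Eval (S.sub (ψ₂ ≫ ψ₁) M') M₁₂' ∧
      α Ψ₂ (ψ₂ ≫ ψ₁ ≫ ψ) M₂ M₂' ∧ α Ψ₂ (ψ₂ ≫ ψ₁ ≫ ψ) M₂ M₁₂ ∧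
      α Ψ₂ (ψ₂ ≫ ψ₁ ≫ ψ) M₂' M₁₂'

end TermSystem

/-- Terms related by `α` or by `Tm(α)` evaluate to `α`-related values. -/
theorem exists_eval_of_or {C : Type u} [Category.{v} C] (S : TermSystem C)
    {Ψ : C} {α : ∀ Ψ' : C, (Ψ' ⟶ Ψ) → S.T Ψ' → S.T Ψ' → Prop}
    (hα : S.IsValuePER α) {Ψ' : C} {ψ : Ψ' ⟶ Ψ} {N N' : S.T Ψ'}
    (h : α Ψ' ψ N N' ∨ S.Tm α ψ N N') :
    ∃ V V', S.Eval N V ∧ S.Eval N' V' ∧ α Ψ' ψ V V' := by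
  obtain ⟨symm, trans, val⟩ := hα
  rcases h with h | h
  · obtain ⟨v, v'⟩ := val _ _ _ _ h
    exact ⟨N, N', ⟨.refl, v⟩, ⟨.refl, v'⟩, h⟩
  · obtain ⟨_, M₂, V, _, M₂', V', -, -, e, -, -, e', r, r₁, r₂⟩ := h Ψ' Ψ' (𝟙 Ψ') (𝟙 Ψ')
    simp only [Category.id_comp, S.sub_id] at e e' r r₁ r₂
    exact ⟨V, V', e, e', trans _ _ _ _ _ (symm _ _ _ _ r₁) (trans _ _ _ _ _ r r₂)⟩

/-- **Introduction lemma.** If every aspect of `M, M'` is related either by `α`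
or by `Tm(α)`, then `Tm(α)(M, M')` holds. -/
theorem introduction {C : Type u} [Category.{v} C] (S : TermSystem C)
    {Ψ : C} (α : ∀ Ψ' : C, (Ψ' ⟶ Ψ) → S.T Ψ' → S.T Ψ' → Prop)
    (hα : S.IsValuePER α) (M M' : S.T Ψ)
    (h : ∀ (Ψ' : C) (ψ : Ψ' ⟶ Ψ),
        α Ψ' ψ (S.sub ψ M) (S.sub ψ M') ∨ S.Tm α ψ (S.sub ψ M) (S.sub ψ M')) :
    S.Tm α (𝟙 Ψ) M M' := by
  obtain ⟨symm, trans, val⟩ := hα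
  intro Ψ₁ Ψ₂ ψ₁ ψ₂
  rcases h Ψ₁ ψ₁ with h₁ | h₁
  · obtain ⟨v, v'⟩ := val _ _ _ _ h₁
    obtain ⟨V, V', e, e', r⟩ := exists_eval_of_or S ⟨symm, trans, val⟩ (h Ψ₂ (ψ₂ ≫ ψ₁))
    have r₁ := trans _ _ _ _ _ r (symm _ _ _ _ r)
    have r₂ := trans _ _ _ _ _ (symm _ _ _ _ r) r
    -- `M⟨ψ₁⟩` is already a value, so evaluating before or after `ψ₂` gives the same result.
    refine ⟨S.sub ψ₁ M, V, V, S.sub ψ₁ M', V', V', ⟨.refl, v⟩, ?_, e, ⟨.refl, v'⟩, ?_, e', ?_⟩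
    · rwa [S.sub_comp]
    · rwa [S.sub_comp]
    · simpa using And.intro r (And.intro r₁ r₂)
  · simpa [S.sub_id, S.sub_comp] using h₁ Ψ₁ Ψ₂ (𝟙 Ψ₁) ψ₂
end

section
/- Let α be a value Ψ-PER and let M, M' ∈ T(Ψ). If for every morphism ψ : Ψ' → Ψ there exists a term M'' ∈ T(Ψ') such that M⟨ψ⟩ reaches M'' under the reflexive-transitive closure of ↦ and Tm(α)_ψ(M'', M'⟨ψ⟩) holds, then Tm(α)(M, M') holds (that is, Tm(α)_{id_Ψ}(M, M')). -/
/-! By determinism of `step`, a term has at most one value. Let `ψ₁` and `ψ₂` be given. The hypothesis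
at `ψ₁`, tested along `𝟙` and `ψ₂`, evaluates `M⟨ψ₁⟩` and then its value under `ψ₂`, and relates the
outcome to the value of `M'⟨ψ₁ ∘ ψ₂⟩`. The hypothesis at `ψ₁ ∘ ψ₂`, tested along identities, relates
the value of `M⟨ψ₁ ∘ ψ₂⟩` to a value of `M'⟨ψ₁ ∘ ψ₂⟩`. Uniqueness of values (`Eval.unique`) identifies
the two values of `M'⟨ψ₁ ∘ ψ₂⟩`, and transitivity through it gives the coherence of `M`. -/

open CategoryTheory

universe u v w

namespace TermSystem

theorem Eval.unique {C : Type u} [Category.{v} C] {S : TermSystem C} {Ψ : C} {M V W : S.T Ψ}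
    (hV : S.Eval M V) (hW : S.Eval M W) : V = W := by
  obtain ⟨hMV, hV⟩ := hV
  obtain ⟨hMW, hW⟩ := hW
  induction hMV using Relation.ReflTransGen.head_induction_on with
  | refl =>
    rcases hMW.cases_head with e | ⟨N, hN, -⟩
    · exact e
    · exact absurd hN (hV N)
  | head hs _ ih =>
    rcases hMW.cases_head with e | ⟨N, hN, hNW⟩
    · subst e
      exact absurd hs (hW _)
    · exact ih (S.step_det hN hs ▸ hNW)

/-- Coherence tested along identities: `Tm`-related terms evaluate to related values. -/
theorem Tm.exists_eval {C : Type u} [Category.{v} C] {S : TermSystem C} {Ψ : C}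
    {α : ∀ Ψ' : C, (Ψ' ⟶ Ψ) → S.T Ψ' → S.T Ψ' → Prop} (hα : S.IsValuePER α)
    {Ψ' : C} {ψ : Ψ' ⟶ Ψ} {M M' : S.T Ψ'} (h : S.Tm α ψ M M') :
    ∃ V V', S.Eval M V ∧ S.Eval M' V' ∧ α Ψ' ψ V V' := by
  obtain ⟨-, V₂, V, -, V₂', V', -, -, hV, -, -, hV', r, s, s'⟩ := h Ψ' Ψ' (𝟙 Ψ') (𝟙 Ψ')
  simp only [Category.id_comp, S.sub_id] at hV hV' r s s'
  exact ⟨V, V', hV, hV', hα.2.1 _ _ _ _ _ (hα.1 _ _ _ _ s) (hα.2.1 _ _ _ _ _ r s')⟩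

end TermSystem

/-- **Coherent expansion lemma.** If every aspect of `M` reduces to some term
related to the corresponding aspect of `M'` by `Tm(α)`, then `Tm(α)(M, M')`. -/
theorem coherent_expansion {C : Type u} [Category.{v} C] (S : TermSystem C)
    {Ψ : C} (α : ∀ Ψ' : C, (Ψ' ⟶ Ψ) → S.T Ψ' → S.T Ψ' → Prop)
    (hα : S.IsValuePER α) (M M' : S.T Ψ)
    (h : ∀ (Ψ' : C) (ψ : Ψ' ⟶ Ψ), ∃ M'' : S.T Ψ',
        Relation.ReflTransGen S.step (S.sub ψ M) M'' ∧
        S.Tm α ψ M'' (S.sub ψ M')) :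
    S.Tm α (𝟙 Ψ) M M' := by
  intro Ψ₁ Ψ₂ ψ₁ ψ₂
  obtain ⟨N, hMN, hN⟩ := h Ψ₁ ψ₁
  obtain ⟨M₁, M₂, -, M₁', M₂', M₁₂', e₁, e₂, -, e₁', e₂', e₁₂', r, -, s'⟩ := hN Ψ₁ Ψ₂ (𝟙 Ψ₁) ψ₂
  simp only [Category.comp_id, Category.id_comp, S.sub_id, S.sub_comp] at e₁ e₁' e₁₂' r s'
  obtain ⟨P, hMP, hP⟩ := h Ψ₂ (ψ₂ ≫ ψ₁)
  obtain ⟨M₁₂, W, hV, hW, t⟩ := hP.exists_eval hα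
  obtain rfl := hW.unique e₁₂'
  rw [Category.comp_id]
  exact ⟨M₁, M₂, M₁₂, M₁', M₂', W, ⟨hMN.trans e₁.1, e₁.2⟩, e₂, ⟨hMP.trans hV.1, hV.2⟩,
    e₁', e₂', e₁₂', r,
    hα.2.1 _ _ _ _ _ r (hα.2.1 _ _ _ _ _ s' (hα.1 _ _ _ _ t)), s'⟩
end

section
/- Let α be a value Ψ-PER that is value-coherent, i.e., α_ψ(V, V') implies Tm(α)_ψ(V, V') for all morphisms ψ : Ψ' → Ψ and all V, V' ∈ T(Ψ'). Then for every morphism ψ : Ψ' → Ψ and every term M ∈ T(Ψ') with Tm(α)_ψ(M, M), there exists a value V such that M ⇓ V and Tm(α)_ψ(M, V). -/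
/-!
Evaluation is unique because steps are deterministic. Coherence of `M` at the identity gives
a value `V` of `M` with `α_ψ V V`, so `Tm α ψ V V` by value-coherence; it remains to compare
`M` with `V` under `ψ₁` and `ψ₂`. Coherence of `M` at the pair consisting of the identity and
`ψ₂ ≫ ψ₁` relates the value `V₁₂` of `V⟨ψ₂ ≫ ψ₁⟩` to the value `M₁₂` of `M⟨ψ₂ ≫ ψ₁⟩`.
Together with the coherence of `M` and of `V` at `ψ₁, ψ₂` this yields the chain
`M₂ ~ M₁₂ ~ V₁₂ ~ V₂`.
-/

open CategoryTheory

universe u v w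

theorem TermSystem.Eval.unique_s3 {C : Type u} [Category.{v} C] {S : TermSystem C} {Ψ : C}
    {M V W : S.T Ψ} (hV : S.Eval M V) (hW : S.Eval M W) : V = W := by
  obtain ⟨hMV, hV⟩ := hV
  induction hMV using Relation.ReflTransGen.head_induction_on with
  | refl =>
    rcases hW.1.cases_head with h | ⟨N, h, -⟩
    · exact h
    · exact absurd h (hV N)
  | head hstep _ ih =>
    rcases hW.1.cases_head with h | ⟨N, h, hN⟩
    · exact absurd hstep (h ▸ hW.2 _)
    · exact ih ⟨S.step_det h hstep ▸ hN, hW.2⟩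

/-- **Value-coherent evaluation.** If `α` is a value-coherent value `Ψ`-PER,
then every term related to itself by `Tm(α)_ψ` evaluates to a value to which it
is `Tm(α)_ψ`-related. -/
theorem value_coherent_evals {C : Type u} [Category.{v} C] (S : TermSystem C)
    {Ψ : C} (α : ∀ Ψ' : C, (Ψ' ⟶ Ψ) → S.T Ψ' → S.T Ψ' → Prop)
    (hα : S.IsValuePER α)
    (hcoh : ∀ (Ψ' : C) (ψ : Ψ' ⟶ Ψ) (V V' : S.T Ψ'),
        α Ψ' ψ V V' → S.Tm α ψ V V') :
    ∀ (Ψ' : C) (ψ : Ψ' ⟶ Ψ) (M : S.T Ψ'), S.Tm α ψ M M →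
      ∃ V : S.T Ψ', S.Eval M V ∧ S.Tm α ψ M V := by
  obtain ⟨hsymm, htrans, -⟩ := hα
  intro Ψ' ψ M hM
  -- Coherence at the pair of an identity and `φ`: evaluating first does not affect `M⟨φ⟩`.
  have key : ∀ (Φ : C) (φ : Φ ⟶ Ψ'), ∃ (V : S.T Ψ') (A B : S.T Φ),
      S.Eval M V ∧ S.Eval (S.sub φ V) A ∧ S.Eval (S.sub φ M) B ∧ α Φ (φ ≫ ψ) A B := by
    intro Φ φ
    obtain ⟨V, A, B, -, -, -, h1, h2, h3, -, -, -, -, h, -⟩ := hM Ψ' Φ (𝟙 Ψ') φ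
    rw [S.sub_id] at h1
    rw [Category.comp_id] at h3
    rw [Category.id_comp] at h
    exact ⟨V, A, B, h1, h2, h3, h⟩
  obtain ⟨V, A, B, hMV, hA, hB, hAB⟩ := key Ψ' (𝟙 Ψ')
  rw [S.sub_id] at hA hB
  -- `V` is already a value, so both other values at the identity coincide with `V`.
  obtain rfl : V = A := TermSystem.Eval.unique_s3 ⟨.refl, hMV.2⟩ hA
  obtain rfl : V = B := hMV.unique_s3 hB
  rw [Category.id_comp] at hAB
  have hV : S.Tm α ψ V V := hcoh Ψ' ψ V V hAB
  refine ⟨V, hMV, fun Ψ₁ Ψ₂ ψ₁ ψ₂ => ?_⟩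
  obtain ⟨M₁, M₂, M₁₂, -, -, -, hM₁, hM₂, hM₁₂, -, -, -, -, hαM, -⟩ := hM Ψ₁ Ψ₂ ψ₁ ψ₂
  obtain ⟨V₁, V₂, V₁₂, -, -, -, hV₁, hV₂, hV₁₂, -, -, -, -, hαV, -⟩ := hV Ψ₁ Ψ₂ ψ₁ ψ₂
  obtain ⟨W, A, B, hW, hA, hB, hAB⟩ := key Ψ₂ (ψ₂ ≫ ψ₁)
  obtain rfl := hMV.unique_s3 hW
  obtain rfl := hV₁₂.unique_s3 hA
  obtain rfl := hM₁₂.unique_s3 hB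
  rw [Category.assoc] at hAB
  exact ⟨M₁, M₂, M₁₂, V₁, V₂, V₁₂, hM₁, hM₂, hM₁₂, hV₁, hV₂, hV₁₂,
    htrans _ _ _ _ _ hαM (htrans _ _ _ _ _ (hsymm _ _ _ _ hAB) (hsymm _ _ _ _ hαV)), hαM, hαV⟩
end

section
/- Suppose that G(Φ(b)) ≤ Φ(opt G(b)) for every b ∈ L. Then G(gfp Φ) ≤ gfp Φ; equivalently, opt G(gfp Φ) = gfp Φ. -/
/-- `opt G (b) = b ⊔ G b`. -/
def optF {L : Type*} [CompleteLattice L] (G : L → L) (b : L) : L := b ⊔ G b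

theorem gfp_closed {L : Type*} [CompleteLattice L] (G : L → L) (hG : Monotone G)
    (Φ : L → L) (hΦ : Monotone Φ)
    (h : ∀ b : L, G (Φ b) ≤ Φ (optF G b)) :
    G (OrderHom.gfp ⟨Φ, hΦ⟩) ≤ OrderHom.gfp ⟨Φ, hΦ⟩ ∧
      optF G (OrderHom.gfp ⟨Φ, hΦ⟩) = OrderHom.gfp ⟨Φ, hΦ⟩ := by
  -- `optF G (gfp Φ)` is a post-fixed point of `Φ`, hence below `gfp Φ` by coinduction.
  have hfix : Φ (OrderHom.gfp ⟨Φ, hΦ⟩) = OrderHom.gfp ⟨Φ, hΦ⟩ :=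
    OrderHom.map_gfp (⟨Φ, hΦ⟩ : L →o L)
  have hle : optF G (OrderHom.gfp ⟨Φ, hΦ⟩) ≤ OrderHom.gfp ⟨Φ, hΦ⟩ := by
    refine OrderHom.le_gfp (⟨Φ, hΦ⟩ : L →o L) (sup_le ?_ ?_)
    · exact hfix.ge.trans (hΦ le_sup_left)
    · have hg := h (OrderHom.gfp ⟨Φ, hΦ⟩)
      rwa [hfix] at hg
  exact ⟨le_sup_right.trans hle, le_antisymm hle le_sup_left⟩
end
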